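/- Fix real numbers a, b, c. The cubic function V(m) = 1 + a·m + b·m² + c·m³ belongs to the class 𝒱 (i.e., it is the variance function of a CSK family generated by some non-degenerate compactly supported probability measure on ℝ with mean 0 and variance 1) if and only if (b+1)³ ≥ 27c². -/

import Mathlib

open MeasureTheory Filter

noncomputable section

/-- The Cauchy–Stieltjes kernel density `f(x,m) = V(m)/(V(m)+m(m-x))`. -/
def cskKernel (V : ℝ → ℝ) (m x : ℝ) : ℝ := V m / (V m + m * (m - x))

/-- `ν` is a non-degenerate, compactly supported probability measure on `ℝ` with mean `0`. -/
def IsCSKGenerator (ν : Measure ℝ) : Prop :=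
  IsProbabilityMeasure ν ∧
  (∃ R : ℝ, ν (Set.Icc (-R) R)ᶜ = 0) ∧
  (∀ a : ℝ, ν ≠ Measure.dirac a) ∧
  (∫ x, x ∂ν) = 0

/-- `V` is the variance function of the CSK family generated by `ν`:
`V` is real-analytic near `0`, `V 0 > 0`, and for all `m` near `0` the kernel
`f(x,m)` is a.e. nonnegative, integrates to `1`, and has mean `m`. -/
def IsCSKVarianceFun (ν : Measure ℝ) (V : ℝ → ℝ) : Prop :=
  AnalyticAt ℝ V 0 ∧ 0 < V 0 ∧
  ∃ ε > 0, ∀ m : ℝ, |m| < ε →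
    (∀ᵐ x ∂ν, 0 ≤ cskKernel V m x) ∧
    (∫ x, cskKernel V m x ∂ν) = 1 ∧
    (∫ x, x * cskKernel V m x ∂ν) = m

/-- The class `𝒱` of variance functions of CSK families generated by
non-degenerate compactly supported probability measures with mean `0` and variance `1`. -/
def memV (V : ℝ → ℝ) : Prop :=
  ∃ ν : Measure ℝ, IsCSKGenerator ν ∧ (∫ x, x ^ 2 ∂ν) = 1 ∧ IsCSKVarianceFun ν V

/-- The class `𝒱∞`: those `V` such that `m ↦ V (c * m)` is in `𝒱` for every real `c`. -/
def memVinf (V : ℝ → ℝ) : Prop := ∀ c : ℝ, memV (fun m => V (c * m))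

/-!
If `G` denotes the Cauchy transform of `ν`, the kernel conditions say `G (m + V m / m) = m / V m`
for small `m`. So `ν` is the measure whose Jacobi coefficients are `0`, `1` followed by those of the
measure with R-transform `r`, where `V m = 1 + m * r m - m ^ 2`; for the cubic,
`r m = a + (b + 1) * m + c * m ^ 2`.

Sufficiency: after an affine change of variables `r m = 3 * m + l * m ^ 2` with `|l| ≤ 1`. The
expected inverse `K ζ = ζ⁻¹ + r ζ` of the Cauchy transform is then real along a curve from the
positive to the negative real axis, and pushing `-π⁻¹ Im (ζ dK)` forward along `K` gives a
probability measure, whose Cauchy transform is computed by residues. The measure `ν` is the spectral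
measure of the multiplication operator of that measure, bordered by one row and one column.

Necessity: the self-energy `σ z = z - 1 / G z` maps the upper half-plane to the closed lower
half-plane, and by analytic continuation from the real axis `V (σ z) = σ z * (z - σ z)`; hence `σ z`
is never a double root `w` of `V w = w * (z - w)`. If `(b + 1) ^ 3 < 27 * c ^ 2`, then for some `z`
in the upper half-plane the only root in the closed lower half-plane is a double one.
-/

open scoped Topology

lemma resolventTransform_eq_integral_inv {A : Type*} [NormedField A] [NormedAlgebra ℝ A]
    (μ : Measure ℝ) (z : A) :
    resolventTransform μ z = ∫ x, (algebraMap ℝ A x - z)⁻¹ ∂μ := by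
  simp only [resolventTransform_apply, resolvent, Ring.inverse_eq_inv']

lemma resolventTransform_ofReal (μ : Measure ℝ) (z : ℝ) :
    resolventTransform μ (z : ℂ) = ((resolventTransform μ z : ℝ) : ℂ) := by
  rw [resolventTransform_eq_integral_inv, resolventTransform_eq_integral_inv,
    ← integral_complex_ofReal]
  simp

lemma ae_abs_le_of_compl_Icc_null {μ : Measure ℝ} {R : ℝ} (hR : μ (Set.Icc (-R) R)ᶜ = 0) :
    ∀ᵐ x ∂μ, |x| ≤ R := by
  filter_upwards [mem_ae_iff.mpr hR] with x hx using abs_le.mpr hx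

section CauchyStieltjes

variable {ν : Measure ℝ} {V : ℝ → ℝ} {R : ℝ}

lemma cskKernel_eq_mul_resolvent {m : ℝ} (hm : m ≠ 0) (x : ℝ) :
    cskKernel V m x = -(V m / m) * (x - (m + V m / m))⁻¹ := by
  have hden : V m + m * (m - x) = -m * (x - (m + V m / m)) := by field_simp; ring
  rw [cskKernel, hden, div_eq_mul_inv, mul_inv]
  ring

lemma integral_cskKernel {m : ℝ} (hm : m ≠ 0) :
    ∫ x, cskKernel V m x ∂ν = -(V m / m) * resolventTransform ν (m + V m / m) := by
  simp_rw [cskKernel_eq_mul_resolvent hm, integral_const_mul]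
  rw [resolventTransform_eq_integral_inv]
  rfl

lemma IsCSKVarianceFun.resolventTransform_eventuallyEq (h : IsCSKVarianceFun ν V) :
    ∀ᶠ m in 𝓝[≠] (0 : ℝ), resolventTransform ν (m + V m / m) = -(m / V m) := by
  obtain ⟨hV, hV0, ε, hε, hkernel⟩ := h
  have hpos : ∀ᶠ m in 𝓝 0, 0 < V m := hV.continuousAt.eventually (lt_mem_nhds hV0)
  have hsmall : ∀ᶠ m in 𝓝 (0 : ℝ), |m| < ε := by
    simpa using eventually_abs_sub_lt (0 : ℝ) hε
  filter_upwards [(hpos.and hsmall).filter_mono nhdsWithin_le_nhds, self_mem_nhdsWithin]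
    with m ⟨hVm, hmε⟩ (hm : m ≠ 0)
  have hmass := (hkernel m hmε).2.1
  rw [integral_cskKernel hm] at hmass
  field_simp at hmass ⊢
  linarith

lemma eventually_abs_mul_lt {f : ℝ → ℝ} (hf : ContinuousAt f 0) (hf0 : 0 < f 0) (R : ℝ) :
    ∀ᶠ m in 𝓝 0, |m| * R < f m := by
  have hlim : Tendsto (fun m : ℝ => |m| * R) (𝓝 0) (𝓝 0) :=
    Continuous.tendsto' (by fun_prop) _ _ (by simp)
  exact hlim.eventually_lt hf hf0

lemma cskKernel_denom_pos {m x : ℝ} (hVR : |m| * R < V m + m ^ 2) (hx : |x| ≤ R) :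
    0 < V m + m * (m - x) := by
  have hmx : m * x ≤ |m| * R := (le_abs_self _).trans <| by rw [abs_mul]; gcongr
  linarith

/-- Off the singularity `V m + m (m - x) = 0`, `x f(x, m)` is an affine function of `f(x, m)`;
this is why the mean of the kernel is determined by its mass. -/
lemma mul_cskKernel {m x : ℝ} (hm : m ≠ 0) (hden : V m + m * (m - x) ≠ 0) :
    x * cskKernel V m x = (m + V m / m) * cskKernel V m x - V m / m := by
  rw [cskKernel]
  field_simp
  ring

lemma integral_mul_cskKernel [IsProbabilityMeasure ν] {m : ℝ} (hm : m ≠ 0)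
    (hden : ∀ᵐ x ∂ν, V m + m * (m - x) ≠ 0) (hmass : ∫ x, cskKernel V m x ∂ν = 1) :
    ∫ x, x * cskKernel V m x ∂ν = m := by
  have hint : Integrable (cskKernel V m) ν := .of_integral_ne_zero (by simp [hmass])
  rw [integral_congr_ae (hden.mono fun x hx => mul_cskKernel hm hx),
    integral_sub (hint.const_mul _) (integrable_const _), integral_const_mul, hmass]
  simp

lemma isCSKVarianceFun_of_resolventTransform [IsProbabilityMeasure ν]
    (hR : ν (Set.Icc (-R) R)ᶜ = 0) (hmean : ∫ x, x ∂ν = 0) (hV : AnalyticAt ℝ V 0) (hV0 : 0 < V 0)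
    (h : ∀ᶠ m in 𝓝[≠] (0 : ℝ), resolventTransform ν (m + V m / m) = -(m / V m)) :
    IsCSKVarianceFun ν V := by
  have hVR : ∀ᶠ m in 𝓝 0, |m| * R < V m + m ^ 2 :=
    eventually_abs_mul_lt (hV.continuousAt.add (by fun_prop)) (by simpa using hV0) R
  have hpos : ∀ᶠ m in 𝓝 0, 0 < V m := hV.continuousAt.eventually (lt_mem_nhds hV0)
  obtain ⟨ε, hε, hball⟩ := Metric.eventually_nhds_iff.mp
    ((hVR.and hpos).and (eventually_nhdsWithin_iff.mp h))
  refine ⟨hV, hV0, ε, hε, fun m hm => ?_⟩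
  obtain ⟨⟨hVRm, hVm⟩, htransform⟩ := hball (y := m) (by simpa using hm)
  have hden : ∀ᵐ x ∂ν, 0 < V m + m * (m - x) :=
    (ae_abs_le_of_compl_Icc_null hR).mono fun x hx => cskKernel_denom_pos hVRm hx
  refine ⟨hden.mono fun x hx => div_nonneg hVm.le hx.le, ?_⟩
  rcases eq_or_ne m 0 with rfl | hm0
  · simp [cskKernel, hV0.ne', hmean]
  have hmass : ∫ x, cskKernel V m x ∂ν = 1 := by
    rw [integral_cskKernel hm0, htransform hm0]
    field_simp
  exact ⟨hmass, integral_mul_cskKernel hm0 (hden.mono fun _ => ne_of_gt) hmass⟩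

lemma eventually_lt_abs_add_div (hV : ContinuousAt V 0) (hV0 : 0 < V 0) (R : ℝ) :
    ∀ᶠ m in 𝓝[≠] (0 : ℝ), R < |m + V m / m| := by
  have h := eventually_abs_mul_lt (f := fun m => m ^ 2 + V m) (by fun_prop) (by simpa using hV0) R
  filter_upwards [h.filter_mono nhdsWithin_le_nhds, self_mem_nhdsWithin] with m hm (hm0 : m ≠ 0)
  have hmul : m ^ 2 + V m = m * (m + V m / m) := by field_simp
  rw [hmul] at hm
  exact lt_of_mul_lt_mul_left (hm.trans_le ((le_abs_self _).trans_eq (abs_mul _ _)))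
    (abs_nonneg m)

lemma isCSKGenerator_of_moments [IsProbabilityMeasure ν] (hR : ν (Set.Icc (-R) R)ᶜ = 0)
    (hmean : ∫ x, x ∂ν = 0) (hvar : ∫ x, x ^ 2 ∂ν ≠ 0) : IsCSKGenerator ν := by
  refine ⟨inferInstance, ⟨R, hR⟩, ?_, hmean⟩
  rintro a rfl
  rw [integral_dirac] at hmean
  simp [hmean] at hvar

end CauchyStieltjes

section SpectralMeasure

variable {E : Type*} [NormedAddCommGroup E] [InnerProductSpace ℂ E] [CompleteSpace E]
  {T : E →L[ℂ] E} {Ω : E} {ν : Measure ℝ}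

/-- `ν` is the spectral measure of the operator `T` at the vector `Ω`: it is carried by the
spectrum and represents the continuous functional calculus, seen from `Ω`. -/
structure IsSpectralMeasure (T : E →L[ℂ] E) (Ω : E) (ν : Measure ℝ) : Prop where
  compl_spectrum_null : ν (spectrum ℝ T)ᶜ = 0
  integral_eq : ∀ f : ℝ → ℝ, ContinuousOn f (spectrum ℝ T) →
    ∫ x, f x ∂ν = (inner ℂ Ω (cfc f T Ω)).re

/-- The positive functional `g ↦ re ⟪Ω, g(T) Ω⟫` on continuous functions on the spectrum of `T`;
its Riesz measure is the spectral measure of `T` at `Ω`. -/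
def vectorState (hT : IsSelfAdjoint T) (Ω : E) :
    CompactlySupportedContinuousMap (spectrum ℝ T) ℝ →ₚ[ℝ] ℝ where
  toFun g := (inner ℂ Ω (cfcHom hT g.toContinuousMap Ω)).re
  map_add' g g' := by
    have hadd : (g + g').toContinuousMap = g.toContinuousMap + g'.toContinuousMap := rfl
    simp [hadd]
  map_smul' c g := by
    have hsmul : (c • g).toContinuousMap = c • g.toContinuousMap := rfl
    simp [hsmul]
  monotone' g g' hgg' := by
    have hle : cfcHom hT g.toContinuousMap ≤ cfcHom hT g'.toContinuousMap := cfcHom_mono hT hgg'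
    have hpos := ((ContinuousLinearMap.le_def _ _).mp hle).re_inner_nonneg_right Ω
    simpa [inner_sub_right] using hpos

lemma exists_isSpectralMeasure (hT : IsSelfAdjoint T) (Ω : E) :
    ∃ ν : Measure ℝ, IsSpectralMeasure T Ω ν := by
  have hspec : IsCompact (spectrum ℝ T) := spectrum.isCompact T
  have : CompactSpace (spectrum ℝ T) := isCompact_iff_compactSpace.mp hspec
  refine ⟨(RealRMK.rieszMeasure (vectorState hT Ω)).map Subtype.val, ?_, fun f hf => ?_⟩
  · rw [Measure.map_apply (by fun_prop) hspec.measurableSet.compl]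
    simp
  · rw [(MeasurableEmbedding.subtype_coe hspec.measurableSet).integral_map, cfc_apply f T hT hf]
    exact RealRMK.integral_rieszMeasure (vectorState hT Ω)
      ⟨⟨_, hf.domRestrict⟩, HasCompactSupport.of_compactSpace _⟩

namespace IsSpectralMeasure

lemma isProbabilityMeasure (h : IsSpectralMeasure T Ω ν) (hT : IsSelfAdjoint T) (hΩ : ‖Ω‖ = 1) :
    IsProbabilityMeasure ν := by
  have hone := h.integral_eq (fun _ => 1) continuousOn_const
  rw [cfc_const_one ℝ T] at hone
  have hmass : ν.real Set.univ = 1 := by simpa [hΩ] using hone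
  exact ⟨by rwa [Measure.real, ENNReal.toReal_eq_one_iff] at hmass⟩

lemma compl_Icc_norm_null [Nontrivial E] (h : IsSpectralMeasure T Ω ν) :
    ν (Set.Icc (-‖T‖) ‖T‖)ᶜ = 0 :=
  measure_mono_null (Set.compl_subset_compl.mpr fun _ hx =>
    abs_le.mp (spectrum.norm_le_norm_of_mem hx)) h.compl_spectrum_null

lemma integral_id (h : IsSpectralMeasure T Ω ν) (hT : IsSelfAdjoint T) :
    ∫ x, x ∂ν = (inner ℂ Ω (T Ω)).re := by
  rw [h.integral_eq (fun x => x) continuousOn_id, cfc_id' ℝ T hT]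

lemma integral_sq (h : IsSpectralMeasure T Ω ν) (hT : IsSelfAdjoint T) :
    ∫ x, x ^ 2 ∂ν = ‖T Ω‖ ^ 2 := by
  rw [h.integral_eq (fun x => x ^ 2) (by fun_prop), cfc_pow_id (R := ℝ) T 2 hT, pow_two,
    mul_apply_eq_comp, ← hT.isSymmetric.apply_clm Ω (T Ω)]
  exact inner_self_eq_norm_sq (𝕜 := ℂ) _

lemma mul_resolventTransform [Nontrivial E] (h : IsSpectralMeasure T Ω ν) (hT : IsSelfAdjoint T)
    {z κ : ℝ} (hz : ‖T‖ < |z|) {ψ : E} (hψ : T ψ - (z : ℂ) • ψ = (κ : ℂ) • Ω) :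
    κ * resolventTransform ν z = (inner ℂ Ω ψ).re := by
  have hne : ∀ x ∈ spectrum ℝ T, x - z ≠ 0 := fun x hx hxz =>
    absurd (spectrum.norm_le_norm_of_mem hx) (by simpa [sub_eq_zero.mp hxz] using hz)
  have hcont : ContinuousOn (fun x : ℝ => (x - z)⁻¹) (spectrum ℝ T) := by
    fun_prop (disch := assumption)
  have hsub : cfc (fun x : ℝ => x - z) T ψ = (κ : ℂ) • Ω := by
    rw [cfc_sub (fun x => x) (fun _ => z) T, cfc_const z T, cfc_id' ℝ T, ← hψ]
    simp [Algebra.algebraMap_eq_smul_one]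
  have hinv : cfc (fun x : ℝ => (x - z)⁻¹) T * cfc (fun x : ℝ => x - z) T = 1 := by
    rw [← cfc_mul _ _ T hcont (by fun_prop), ← cfc_const_one ℝ T]
    exact cfc_congr fun x hx => inv_mul_cancel₀ (hne x hx)
  have hψ' : ψ = (κ : ℂ) • cfc (fun x : ℝ => (x - z)⁻¹) T Ω := by
    rw [← map_smul, ← hsub, ← mul_apply_eq_comp, hinv, one_apply_eq_self]
  rw [resolventTransform_eq_integral_inv, hψ', inner_smul_right, Complex.re_ofReal_mul]
  exact congrArg (κ * ·) (h.integral_eq _ hcont)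

end IsSpectralMeasure

end SpectralMeasure

section BorderedOperator

open InnerProductSpace WithLp

variable {F : Type*} [NormedAddCommGroup F] [InnerProductSpace ℂ F]

/-- The operator `(α, f) ↦ (⟪e, f⟫, α e + M f)` on `ℂ ⊕ F`, that is, the matrix
`!![0, e*; e, M]`. It undoes the stripping of the first Jacobi coefficients. -/
def borderedOperator (M : F →L[ℂ] F) (e : F) : WithLp 2 (ℂ × F) →L[ℂ] WithLp 2 (ℂ × F) :=
  (prodContinuousLinearEquiv 2 ℂ ℂ F).symm.toContinuousLinearMap ∘L
    ((innerSL ℂ e ∘L ContinuousLinearMap.snd ℂ ℂ F).prod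
      ((ContinuousLinearMap.toSpanSingleton ℂ e).coprod M)) ∘L
    (prodContinuousLinearEquiv 2 ℂ ℂ F).toContinuousLinearMap

variable {M : F →L[ℂ] F} {e : F}

lemma borderedOperator_toLp (M : F →L[ℂ] F) (e : F) (α : ℂ) (f : F) :
    borderedOperator M e (toLp 2 (α, f)) = toLp 2 (inner ℂ e f, α • e + M f) := by
  simp [borderedOperator]

lemma isSymmetric_borderedOperator (hM : (M : F →ₗ[ℂ] F).IsSymmetric) :
    (borderedOperator M e : WithLp 2 (ℂ × F) →ₗ[ℂ] WithLp 2 (ℂ × F)).IsSymmetric := by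
  rintro ⟨α, f⟩ ⟨β, g⟩
  have hMfg : inner ℂ (M f) g = inner ℂ f (M g) := hM f g
  simp only [ContinuousLinearMap.coe_coe, borderedOperator_toLp, prod_inner_apply,
    inner_add_left, inner_add_right, inner_smul_left, inner_smul_right, hMfg]
  simp
  ring

lemma borderedOperator_sub_smul {z g : ℝ} {h : F} (hh : M h - (z : ℂ) • h = e)
    (hg : inner ℂ e h = (g : ℂ)) :
    borderedOperator M e (toLp 2 (-1, h)) - (z : ℂ) • toLp 2 (-1, h) =
      ((z + g : ℝ) : ℂ) • toLp 2 (1, 0) := by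
  rw [borderedOperator_toLp, hg, ← toLp_smul, ← toLp_smul, ← toLp_sub]
  congr 1
  ext
  · simp [add_comm]
  · simp only [Prod.snd_sub, Prod.smul_snd, neg_smul, one_smul, smul_zero]
    rw [← hh]
    abel

lemma exists_measure_of_borderedOperator [CompleteSpace F]
    (hM : (M : F →ₗ[ℂ] F).IsSymmetric) (he : ‖e‖ = 1) :
    ∃ ν : Measure ℝ, ∃ R : ℝ, IsProbabilityMeasure ν ∧ ν (Set.Icc (-R) R)ᶜ = 0 ∧
      ∫ x, x ∂ν = 0 ∧ ∫ x, x ^ 2 ∂ν = 1 ∧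
      ∀ (z g : ℝ) (h : F), R < |z| → M h - (z : ℂ) • h = e → inner ℂ e h = (g : ℂ) →
        (z + g) * resolventTransform ν z = -1 := by
  have hT : IsSelfAdjoint (borderedOperator M e) :=
    ContinuousLinearMap.isSelfAdjoint_iff_isSymmetric.mpr (isSymmetric_borderedOperator hM)
  obtain ⟨ν, hν⟩ := exists_isSpectralMeasure hT (toLp 2 (1, 0))
  refine ⟨ν, ‖borderedOperator M e‖, hν.isProbabilityMeasure hT (by simp), hν.compl_Icc_norm_null,
    ?_, ?_, fun z g h hz hh hg => ?_⟩
  · rw [hν.integral_id hT, borderedOperator_toLp]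
    simp [prod_inner_apply]
  · rw [hν.integral_sq hT, borderedOperator_toLp]
    simp [he]
  · rw [hν.mul_resolventTransform hT hz (borderedOperator_sub_smul hh hg)]
    simp [prod_inner_apply]

end BorderedOperator

section MultiplicationOperator

variable {α : Type*} {mα : MeasurableSpace α} {μ : Measure α}

/-- Multiplication by an essentially bounded function, as an operator on `L²(μ)`. -/
def mulOperator (X : Lp ℂ ⊤ μ) : Lp ℂ 2 μ →L[ℂ] Lp ℂ 2 μ :=
  (ContinuousLinearMap.mul ℂ ℂ).holderL μ ⊤ 2 2 X

lemma coeFn_mulOperator (X : Lp ℂ ⊤ μ) (f : Lp ℂ 2 μ) :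
    mulOperator X f =ᵐ[μ] fun x => X x * f x :=
  (ContinuousLinearMap.mul ℂ ℂ).coeFn_holder (r := 2) X f

lemma isSymmetric_mulOperator {X : Lp ℂ ⊤ μ} (hX : ∀ᵐ x ∂μ, (X x).im = 0) :
    (mulOperator X : Lp ℂ 2 μ →ₗ[ℂ] Lp ℂ 2 μ).IsSymmetric := by
  intro f g
  rw [L2.inner_def, L2.inner_def]
  refine integral_congr_ae ?_
  filter_upwards [coeFn_mulOperator X f, coeFn_mulOperator X g, hX] with x hf hg hXx
  have hconj : (starRingEnd ℂ) (X x) = X x := Complex.conj_eq_iff_im.mpr hXx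
  simp only [ContinuousLinearMap.coe_coe, hf, hg, RCLike.inner_apply, map_mul, hconj]
  ring

lemma exists_mulOperator_sub_smul_eq_const {μ : Measure ℝ} [IsProbabilityMeasure μ] {S z : ℝ}
    (hS : μ (Set.Icc (-S) S)ᶜ = 0) (hz : S < |z|) {X : Lp ℂ ⊤ μ} (hX : X =ᵐ[μ] fun x => (x : ℂ)) :
    ∃ h : Lp ℂ 2 μ, mulOperator X h - (z : ℂ) • h = Lp.const 2 μ 1 ∧
      inner ℂ (Lp.const 2 μ (1 : ℂ)) h = ((resolventTransform μ z : ℝ) : ℂ) := by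
  have hdist : ∀ᵐ x ∂μ, |z| - S ≤ |x - z| :=
    (ae_abs_le_of_compl_Icc_null hS).mono fun x hx => by
      linarith [abs_sub_abs_le_abs_sub z x, abs_sub_comm z x]
  have hresolvent : MemLp (fun x : ℝ => (((x - z)⁻¹ : ℝ) : ℂ)) 2 μ := by
    refine (memLp_top_of_bound (by fun_prop) (|z| - S)⁻¹ ?_).mono_exponent le_top
    filter_upwards [hdist] with x hx
    rw [Complex.norm_real, Real.norm_eq_abs, abs_inv]
    exact inv_anti₀ (sub_pos.mpr hz) hx
  refine ⟨hresolvent.toLp _, Lp.ext <| (Lp.coeFn_sub _ _).trans ?_, ?_⟩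
  · filter_upwards [Lp.coeFn_smul (z : ℂ) (hresolvent.toLp _),
      coeFn_mulOperator X (hresolvent.toLp _), hX, hresolvent.coeFn_toLp,
      Lp.coeFn_const 2 μ (1 : ℂ), hdist] with x hsmul hmul hid hinv hone hx
    have hne : (x : ℂ) - z ≠ 0 := by
      exact_mod_cast abs_pos.mp ((sub_pos.mpr hz).trans_le hx)
    rw [Pi.sub_apply, hmul, hsmul, hone, Pi.smul_apply, hid, hinv, Complex.ofReal_inv,
      Complex.ofReal_sub, smul_eq_mul, ← sub_mul, mul_inv_cancel₀ hne, Function.const_apply]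
  · rw [L2.inner_def, ← resolventTransform_ofReal, resolventTransform_eq_integral_inv]
    refine integral_congr_ae ?_
    filter_upwards [hresolvent.coeFn_toLp, Lp.coeFn_const 2 μ (1 : ℂ)] with x hinv hone
    rw [hinv, hone, Function.const_apply, RCLike.inner_apply, map_one, mul_one]
    simp

end MultiplicationOperator

/-- The continued fraction expansion read backwards: `ν` is the measure whose Jacobi coefficients
are `0` and `1` followed by those of `μ`. -/
lemma exists_measure_of_stripping {μ : Measure ℝ} [IsProbabilityMeasure μ] {S : ℝ}
    (hS : μ (Set.Icc (-S) S)ᶜ = 0) :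
    ∃ ν : Measure ℝ, ∃ R : ℝ, IsProbabilityMeasure ν ∧ ν (Set.Icc (-R) R)ᶜ = 0 ∧
      ∫ x, x ∂ν = 0 ∧ ∫ x, x ^ 2 ∂ν = 1 ∧
      ∀ z : ℝ, R < |z| → S < |z| →
        (z + resolventTransform μ z) * resolventTransform ν z = -1 := by
  have hX : MemLp (fun x : ℝ => (x : ℂ)) ⊤ μ :=
    memLp_top_of_bound (by fun_prop) S
      ((ae_abs_le_of_compl_Icc_null hS).mono fun x hx => by simpa using hx)
  have hXreal : ∀ᵐ x ∂μ, (hX.toLp (fun x : ℝ => (x : ℂ)) x).im = 0 :=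
    hX.coeFn_toLp.mono fun x hx => by simp [hx]
  have hone : ‖Lp.const 2 μ (1 : ℂ)‖ = 1 := by simp [Lp.norm_const]
  obtain ⟨ν, R, hν, hR, hmean, hvar, htransform⟩ :=
    exists_measure_of_borderedOperator (isSymmetric_mulOperator hXreal) hone
  refine ⟨ν, R, hν, hR, hmean, hvar, fun z hzR hzS => ?_⟩
  obtain ⟨h, hh, hinner⟩ := exists_mulOperator_sub_smul_eq_const hS hzS hX.coeFn_toLp
  exact htransform z _ h hzR hh hinner

section RTransform

variable {μ : Measure ℝ} {r : ℝ → ℝ}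

/-- `r` is Voiculescu's R-transform of `μ`, characterised by `G(1/m + r m) = m` near `0` for the
Cauchy transform `G(z) = ∫ (z - x)⁻¹ dμ`, which is minus the resolvent transform. -/
def HasRTransform (μ : Measure ℝ) (r : ℝ → ℝ) : Prop :=
  ∀ᶠ m in 𝓝[≠] (0 : ℝ), resolventTransform μ (m⁻¹ + r m) = -m

/-- With `z = m + V m / m = m⁻¹ + r m`, stripping turns `G_μ(z) = m` into
`G_ν(z) = (z - m)⁻¹ = m / V m`. -/
lemma HasRTransform.memV [IsProbabilityMeasure μ] {S : ℝ} (h : HasRTransform μ r)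
    (hS : μ (Set.Icc (-S) S)ᶜ = 0) (hr : AnalyticAt ℝ r 0) :
    memV (fun m => 1 + m * r m - m ^ 2) := by
  set V : ℝ → ℝ := fun m => 1 + m * r m - m ^ 2 with hVdef
  have hV : AnalyticAt ℝ V 0 := by fun_prop
  have hV0 : 0 < V 0 := by simp [hVdef]
  obtain ⟨ν, R, hν, hR, hmean, hvar, hstrip⟩ := exists_measure_of_stripping hS
  refine ⟨ν, isCSKGenerator_of_moments hR hmean (by simp [hvar]), hvar,
    isCSKVarianceFun_of_resolventTransform hR hmean hV hV0 ?_⟩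
  filter_upwards [h, eventually_lt_abs_add_div hV.continuousAt hV0 R,
    eventually_lt_abs_add_div hV.continuousAt hV0 S, self_mem_nhdsWithin] with m hm hzR hzS hm0
  have hm0 : m ≠ 0 := hm0
  have hz : m⁻¹ + r m = m + V m / m := by simp only [hVdef]; field_simp; ring
  have hprod := hstrip _ hzR hzS
  rw [← hz, hm, hz, add_neg_cancel_comm] at hprod
  have hVm : V m ≠ 0 := fun h0 => by simp [h0] at hprod
  field_simp at hprod ⊢
  linarith

lemma hasRTransform_dirac (a : ℝ) : HasRTransform (Measure.dirac a) (fun _ => a) := by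
  simp [HasRTransform, resolvent, Ring.inverse_eq_inv']

lemma HasRTransform.map_affine {t : ℝ} (h : HasRTransform μ r) (a : ℝ) (ht : t ≠ 0) :
    HasRTransform (μ.map fun x => a + t * x) (fun m => a + t * r (t * m)) := by
  have hscale : Tendsto (t * ·) (𝓝[≠] (0 : ℝ)) (𝓝[≠] 0) := by
    refine tendsto_nhdsWithin_of_tendsto_nhds_of_eventually_within _ ?_ ?_
    · exact (Continuous.tendsto' (by fun_prop) _ _ (by simp)).mono_left nhdsWithin_le_nhds
    · filter_upwards [self_mem_nhdsWithin] with m (hm : m ≠ 0) using mul_ne_zero ht hm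
  filter_upwards [hscale.eventually h] with m hm
  rw [resolventTransform_eq_integral_inv, integral_map (by fun_prop) (by fun_prop)]
  rw [resolventTransform_eq_integral_inv] at hm
  have key : ∀ x, (a + t * x - (m⁻¹ + (a + t * r (t * m))))⁻¹ =
      t⁻¹ * (x - ((t * m)⁻¹ + r (t * m)))⁻¹ := fun x => by
    rw [← mul_inv]; congr 1; field_simp; ring
  simp only [Algebra.algebraMap_self, RingHom.id_apply, key, integral_const_mul] at hm ⊢
  rw [hm]
  field_simp

end RTransform

lemma exists_measure_of_density {α : Type*} {mα : MeasurableSpace α} {κ : Measure α}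
    {w X : α → ℝ} {S : ℝ} (hw : Integrable w κ) (hw0 : 0 ≤ᵐ[κ] w) (hw1 : ∫ a, w a ∂κ = 1)
    (hX : Measurable X) (hXS : ∀ a, |X a| ≤ S) :
    ∃ μ : Measure ℝ, IsProbabilityMeasure μ ∧ μ (Set.Icc (-S) S)ᶜ = 0 ∧
      ∀ f : ℝ → ℝ, Measurable f → ∫ x, f x ∂μ = ∫ a, w a * f (X a) ∂κ := by
  have hprob : IsProbabilityMeasure (κ.withDensity fun a => ENNReal.ofReal (w a)) := by
    refine ⟨?_⟩
    rw [withDensity_apply _ MeasurableSet.univ, Measure.restrict_univ,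
      ← ofReal_integral_eq_lintegral_ofReal hw hw0, hw1, ENNReal.ofReal_one]
  refine ⟨(κ.withDensity fun a => ENNReal.ofReal (w a)).map X,
    Measure.isProbabilityMeasure_map hX.aemeasurable, ?_, fun f hf => ?_⟩
  · have hempty : X ⁻¹' (Set.Icc (-S) S)ᶜ = ∅ :=
      Set.eq_empty_of_forall_notMem fun a ha => ha (abs_le.mp (hXS a))
    rw [Measure.map_apply hX measurableSet_Icc.compl, hempty, measure_empty]
  · rw [integral_map hX.aemeasurable hf.aestronglyMeasurable,
      integral_withDensity_eq_integral_toReal_smul₀ hw.aemeasurable.ennreal_ofReal (by simp)]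
    refine integral_congr_ae (hw0.mono fun a ha => ?_)
    simp only [smul_eq_mul, ENNReal.toReal_ofReal (show 0 ≤ w a from ha)]

lemma exists_primitive_real_on_reals {R : ℝ} {g : ℂ → ℂ}
    (hg : DifferentiableOn ℂ g (Metric.ball 0 R)) (hreal : ∀ x : ℝ, (g x).im = 0) :
    ∃ F : ℂ → ℂ, (∀ ζ ∈ Metric.ball (0 : ℂ) R, HasDerivAt F (g ζ) ζ) ∧
      ∀ x : ℝ, |x| < R → (F x).im = 0 := by
  obtain ⟨F, hF0, hF⟩ := hg.isExactOn_ball.with_val_at 0 0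
  refine ⟨F, hF, fun x hx => ?_⟩
  have hderiv : ∀ y ∈ Set.Ioo (-R) R,
      HasDerivWithinAt (fun y : ℝ => (F y).im) 0 (Set.Ioo (-R) R) y := by
    intro y hy
    have hFy := (hF y (by simpa [abs_lt] using hy)).comp_ofReal
    have him := Complex.imCLM.hasFDerivAt.comp_hasDerivAt y hFy
    exact (him.congr_deriv (by simp [hreal])).hasDerivWithinAt
  have hconst := (convex_Ioo (-R) R).norm_image_sub_le_of_norm_hasDerivWithin_le (C := 0) hderiv
    (by simp) (x := 0) (y := x) (by simpa using (abs_nonneg x).trans_lt hx) (abs_lt.mp hx)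
  simpa [hF0] using hconst

section PolarCurve

open Real Set

/-- The curve with polar equation `radius = ρ θ`. -/
def polarCurve (ρ : ℝ → ℝ) (θ : ℝ) : ℂ := ρ θ * Complex.exp (θ * Complex.I)

variable {ρ : ℝ → ℝ} {θ : ℝ}

lemma norm_polarCurve (ρ : ℝ → ℝ) (θ : ℝ) : ‖polarCurve ρ θ‖ = |ρ θ| := by
  simp [polarCurve, Complex.norm_exp_ofReal_mul_I]

lemma im_polarCurve (ρ : ℝ → ℝ) (θ : ℝ) : (polarCurve ρ θ).im = ρ θ * sin θ := by
  simp [polarCurve, Complex.exp_ofReal_mul_I_im]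

lemma polarCurve_zero (ρ : ℝ → ℝ) : polarCurve ρ 0 = (ρ 0 : ℝ) := by
  simp [polarCurve]

lemma polarCurve_pi (ρ : ℝ → ℝ) : polarCurve ρ π = (-ρ π : ℝ) := by
  simp [polarCurve]

lemma polarCurve_ne_zero (h : ρ θ ≠ 0) : polarCurve ρ θ ≠ 0 := by
  simp [polarCurve, h]

@[fun_prop]
lemma continuous_polarCurve (h : Continuous ρ) : Continuous (polarCurve ρ) := by
  unfold polarCurve
  fun_prop

lemma hasDerivAt_polarCurve (h : DifferentiableAt ℝ ρ θ) (h0 : ρ θ ≠ 0) :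
    HasDerivAt (polarCurve ρ) (polarCurve ρ θ * ((logDeriv ρ θ : ℝ) + Complex.I)) θ := by
  have hexp : HasDerivAt (fun θ : ℝ => Complex.exp (θ * Complex.I))
      (Complex.exp (θ * Complex.I) * Complex.I) θ := by
    simpa using (((hasDerivAt_id (θ : ℂ)).mul_const Complex.I).cexp).comp_ofReal
  refine (h.hasDerivAt.ofReal_comp.mul hexp).congr_deriv ?_
  have hρ : (ρ θ : ℂ) ≠ 0 := by exact_mod_cast h0
  rw [polarCurve, logDeriv_apply]
  push_cast
  field_simp

lemma logDeriv_polarCurve (h : DifferentiableAt ℝ ρ θ) (h0 : ρ θ ≠ 0) :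
    logDeriv (polarCurve ρ) θ = (logDeriv ρ θ : ℝ) + Complex.I := by
  rw [logDeriv_apply, (hasDerivAt_polarCurve h h0).deriv,
    mul_div_cancel_left₀ _ (polarCurve_ne_zero h0)]

/-- Along the curve the angle grows at unit speed, so a simple pole of residue `κ` at the origin
contributes `κ θ` to the imaginary part of the primitive. -/
lemma hasDerivAt_im_primitive (h : DifferentiableAt ℝ ρ θ) (h0 : ρ θ ≠ 0) {L : ℂ → ℂ} {g : ℂ}
    {κ : ℝ} (hL : HasDerivAt L (g - κ / polarCurve ρ θ) (polarCurve ρ θ)) :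
    HasDerivAt (fun θ => κ * θ + (L (polarCurve ρ θ)).im) (g * deriv (polarCurve ρ) θ).im θ := by
  have hγ := (hasDerivAt_polarCurve h h0).differentiableAt.hasDerivAt
  have him := Complex.imCLM.hasFDerivAt.comp_hasDerivAt θ (hL.comp θ hγ)
  refine (((hasDerivAt_id θ).const_mul κ).add him).congr_deriv ?_
  have hpole : (κ : ℂ) / polarCurve ρ θ * deriv (polarCurve ρ) θ =
      κ * logDeriv (polarCurve ρ) θ := by rw [logDeriv_apply]; ring
  have hκ : (κ * logDeriv (polarCurve ρ) θ).im = κ := by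
    simp [logDeriv_polarCurve h h0]
  rw [sub_mul, hpole]
  simp only [Complex.imCLM_apply, Complex.sub_im, hκ]
  ring

variable (hρ : Continuous ρ) (hpos : ∀ θ, 0 < ρ θ)
  (hdiff : ∀ θ ∈ Ioo 0 π, DifferentiableAt ℝ ρ θ) {U : Set ℂ} (hU : ∀ θ, polarCurve ρ θ ∈ U)
  {L g : ℂ → ℂ} {κ : ℝ} (hL : ∀ ζ ∈ U, HasDerivAt L (g ζ - κ / ζ) ζ)

include hρ hU hL in
lemma continuous_im_primitive :
    Continuous fun θ => κ * θ + (L (polarCurve ρ θ)).im := by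
  refine (continuous_const_mul κ).add (Complex.continuous_im.comp ?_)
  exact continuous_iff_continuousAt.mpr fun θ =>
    (hL _ (hU θ)).continuousAt.comp (continuous_polarCurve hρ).continuousAt

include hρ hpos hdiff hU hL

lemma integrableOn_im_mul_deriv_polarCurve
    (hneg : ∀ θ ∈ Ioo 0 π, (g (polarCurve ρ θ) * deriv (polarCurve ρ) θ).im ≤ 0) :
    IntegrableOn (fun θ => (g (polarCurve ρ θ) * deriv (polarCurve ρ) θ).im) (Ioo 0 π) := by
  have hint := intervalIntegral.integrableOn_deriv_of_nonneg
    (continuous_im_primitive hρ hU hL).neg.continuousOn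
    (fun θ hθ => (hasDerivAt_im_primitive (hdiff θ hθ) (hpos θ).ne' (hL _ (hU θ))).neg)
    (fun θ hθ => neg_nonneg.mpr (hneg θ hθ))
  exact integrable_neg_iff.mp (hint.mono_set Ioo_subset_Ioc_self)

/-- Half of the residue theorem for the closed curve obtained by reflection in the real axis. -/
lemma setIntegral_im_mul_deriv_polarCurve (hreal : ∀ x : ℝ, (x : ℂ) ∈ U → (L x).im = 0)
    (hint : IntegrableOn (fun θ => (g (polarCurve ρ θ) * deriv (polarCurve ρ) θ).im) (Ioo 0 π)) :
    ∫ θ in Ioo 0 π, (g (polarCurve ρ θ) * deriv (polarCurve ρ) θ).im = κ * π := by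
  have hzero : (L (polarCurve ρ 0)).im = 0 := by
    simpa [polarCurve_zero] using hreal (ρ 0) (polarCurve_zero ρ ▸ hU 0)
  have hpi : (L (polarCurve ρ π)).im = 0 := by
    simpa [polarCurve_pi] using hreal (-ρ π) (polarCurve_pi ρ ▸ hU π)
  rw [← integral_Ioc_eq_integral_Ioo, ← intervalIntegral.integral_of_le pi_nonneg,
    intervalIntegral.integral_eq_sub_of_hasDerivAt_of_le pi_nonneg
      (continuous_im_primitive hρ hU hL).continuousOn
      (fun θ hθ => hasDerivAt_im_primitive (hdiff θ hθ) (hpos θ).ne' (hL _ (hU θ)))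
      ((intervalIntegrable_iff_integrableOn_Ioo_of_le pi_nonneg).mpr hint), hzero, hpi]
  ring

end PolarCurve

section CubicRoot

open Real

/-- The largest root of `s ^ 3 - 3 * s = 2 * y` for `|y| ≤ 1`, by Viète's trigonometric formula. -/
def cubicRoot (y : ℝ) : ℝ := 2 * cos (arccos y / 3)

variable {y : ℝ}

lemma cubicRoot_cube (hy : |y| ≤ 1) : cubicRoot y ^ 3 - 3 * cubicRoot y = 2 * y := by
  have htriple := cos_three_mul (arccos y / 3)
  rw [mul_div_cancel₀ _ three_ne_zero, cos_arccos (abs_le.mp hy).1 (abs_le.mp hy).2] at htriple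
  rw [cubicRoot]
  linear_combination -2 * htriple

lemma one_le_cubicRoot (y : ℝ) : 1 ≤ cubicRoot y := by
  have hcos : cos (π / 3) ≤ cos (arccos y / 3) :=
    cos_le_cos_of_nonneg_of_le_pi (by linarith [arccos_nonneg y]) (by linarith [pi_pos])
      (by linarith [arccos_le_pi y])
  rw [cos_pi_div_three] at hcos
  rw [cubicRoot]
  linarith

lemma cubicRoot_le_two (y : ℝ) : cubicRoot y ≤ 2 := by
  rw [cubicRoot]
  linarith [cos_le_one (arccos y / 3)]

lemma cubicRoot_pos (y : ℝ) : 0 < cubicRoot y := one_pos.trans_le (one_le_cubicRoot y)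

@[fun_prop]
lemma continuous_cubicRoot : Continuous cubicRoot := by
  unfold cubicRoot
  fun_prop

lemma differentiableAt_cubicRoot (hy : |y| < 1) : DifferentiableAt ℝ cubicRoot y := by
  have harccos : DifferentiableAt ℝ arccos y :=
    differentiableAt_arccos.mpr ⟨(abs_lt.mp hy).1.ne', (abs_lt.mp hy).2.ne⟩
  unfold cubicRoot
  fun_prop

end CubicRoot

section BoundaryCurve

open Real Set

/-- The functional inverse `K` of the Cauchy transform of the measure with R-transform
`m ↦ 3 * m + l * m ^ 2`. -/
def cauchyInverse (l : ℝ) (ζ : ℂ) : ℂ := ζ⁻¹ + 3 * ζ + l * ζ ^ 2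

/-- The Euler derivative `ζ K'(ζ)` of `K = cauchyInverse l`. -/
def eulerCauchyInverse (l : ℝ) (ζ : ℂ) : ℂ := -ζ⁻¹ + 3 * ζ + 2 * l * ζ ^ 2

/-- The closed annulus `1 / 2 ≤ ‖ζ‖ ≤ 1`. -/
def annulus : Set ℂ := {ζ | 1 / 2 ≤ ‖ζ‖ ∧ ‖ζ‖ ≤ 1}

/-- The radius at angle `θ` of the curve in the upper half-plane on which `cauchyInverse l` is
real: it is the reciprocal of the root `s` of `s ^ 3 - 3 * s = 2 * l * cos θ`. -/
def boundaryRadius (l θ : ℝ) : ℝ := (cubicRoot (l * cos θ))⁻¹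

/-- The curve on which `cauchyInverse l` is real, the image of the boundary of the upper
half-plane under the (conjugate) Cauchy transform. -/
def boundaryCurve (l : ℝ) : ℝ → ℂ := polarCurve (boundaryRadius l)

variable {l θ : ℝ}

lemma ne_zero_of_mem_annulus {ζ : ℂ} (hζ : ζ ∈ annulus) : ζ ≠ 0 :=
  norm_pos_iff.mp (one_half_pos.trans_le hζ.1)

lemma hasDerivAt_cauchyInverse (l : ℝ) {ζ : ℂ} (hζ : ζ ≠ 0) :
    HasDerivAt (cauchyInverse l) (eulerCauchyInverse l ζ / ζ) ζ := by
  refine (((hasDerivAt_inv hζ).add ((hasDerivAt_id ζ).const_mul 3)).add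
    ((hasDerivAt_pow 2 ζ).const_mul (l : ℂ))).congr_deriv ?_
  rw [eulerCauchyInverse]
  field_simp
  push_cast
  ring

lemma abs_mul_cos_le (hl : |l| ≤ 1) (θ : ℝ) : |l * cos θ| ≤ 1 := by
  rw [abs_mul]
  exact mul_le_one₀ hl (abs_nonneg _) (abs_cos_le_one θ)

lemma abs_mul_cos_lt (hl : |l| ≤ 1) (hθ : θ ∈ Ioo 0 π) : |l * cos θ| < 1 := by
  have hcos : |cos θ| < 1 := by
    rw [← sq_lt_one_iff_abs_lt_one]
    nlinarith [sin_sq_add_cos_sq θ, sin_pos_of_mem_Ioo hθ]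
  rw [abs_mul]
  nlinarith [abs_nonneg l, abs_nonneg (cos θ)]

lemma boundaryRadius_pos (l θ : ℝ) : 0 < boundaryRadius l θ := inv_pos.mpr (cubicRoot_pos _)

@[fun_prop]
lemma continuous_boundaryRadius (l : ℝ) : Continuous (boundaryRadius l) :=
  Continuous.inv₀ (by fun_prop) fun _ => (cubicRoot_pos _).ne'

lemma differentiableAt_boundaryRadius (hl : |l| ≤ 1) (hθ : θ ∈ Ioo 0 π) :
    DifferentiableAt ℝ (boundaryRadius l) θ :=
  ((differentiableAt_cubicRoot (abs_mul_cos_lt hl hθ)).fun_comp' θ (by fun_prop)).fun_inv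
    (cubicRoot_pos _).ne'

lemma boundaryRadius_le_one (l θ : ℝ) : boundaryRadius l θ ≤ 1 :=
  inv_le_one_of_one_le₀ (one_le_cubicRoot _)

lemma boundaryRadius_cubic (hl : |l| ≤ 1) (θ : ℝ) :
    1 - 3 * boundaryRadius l θ ^ 2 = 2 * l * cos θ * boundaryRadius l θ ^ 3 := by
  have hcube := cubicRoot_cube (abs_mul_cos_le hl θ)
  have hne := (cubicRoot_pos (l * cos θ)).ne'
  rw [boundaryRadius]
  field_simp
  linarith

lemma boundaryCurve_mem_annulus (l θ : ℝ) : boundaryCurve l θ ∈ annulus := by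
  rw [annulus, mem_ofPred_eq, boundaryCurve, norm_polarCurve, abs_of_pos (boundaryRadius_pos l θ)]
  refine ⟨?_, boundaryRadius_le_one l θ⟩
  rw [boundaryRadius, one_div]
  exact inv_anti₀ (cubicRoot_pos _) (cubicRoot_le_two _)

lemma im_laurent_polarCurve {ρ : ℝ → ℝ} (h0 : ρ θ ≠ 0) (p q r : ℝ) :
    ((p : ℂ) * (polarCurve ρ θ)⁻¹ + q * polarCurve ρ θ + r * polarCurve ρ θ ^ 2).im =
      sin θ * (-p / ρ θ + q * ρ θ + 2 * r * cos θ * ρ θ ^ 2) := by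
  have hre : (polarCurve ρ θ).re = ρ θ * cos θ := by simp [polarCurve, Complex.exp_ofReal_mul_I_re]
  have hnormSq : Complex.normSq (polarCurve ρ θ) = ρ θ ^ 2 := by
    rw [Complex.normSq_eq_norm_sq, norm_polarCurve, sq_abs]
  have him_sq : (polarCurve ρ θ ^ 2).im = 2 * (polarCurve ρ θ).re * (polarCurve ρ θ).im := by
    rw [pow_two, Complex.mul_im]
    ring
  simp only [Complex.add_im, Complex.im_ofReal_mul, Complex.inv_im, him_sq, hnormSq, hre,
    im_polarCurve]
  field_simp

lemma im_cauchyInverse_boundaryCurve (hl : |l| ≤ 1) (θ : ℝ) :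
    (cauchyInverse l (boundaryCurve l θ)).im = 0 := by
  have hne := (boundaryRadius_pos l θ).ne'
  have him := im_laurent_polarCurve hne 1 3 l
  push_cast at him
  rw [one_mul] at him
  rw [cauchyInverse, boundaryCurve, him]
  have hcubic := boundaryRadius_cubic hl θ
  field_simp
  linear_combination (-sin θ) * hcubic

lemma im_eulerCauchyInverse_boundaryCurve (hl : |l| ≤ 1) (θ : ℝ) :
    (eulerCauchyInverse l (boundaryCurve l θ)).im =
      3 * sin θ * (1 - boundaryRadius l θ ^ 2) / boundaryRadius l θ := by
  have hne := (boundaryRadius_pos l θ).ne'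
  have him := im_laurent_polarCurve hne (-1) 3 (2 * l)
  push_cast at him
  rw [neg_one_mul] at him
  rw [eulerCauchyInverse, boundaryCurve, him]
  have hcubic := boundaryRadius_cubic hl θ
  field_simp
  linear_combination (-2 * sin θ) * hcubic

lemma im_eulerCauchyInverse_mul_logDeriv (hl : |l| ≤ 1) (hθ : θ ∈ Ioo 0 π) :
    (eulerCauchyInverse l (boundaryCurve l θ) * logDeriv (boundaryCurve l) θ).im = 0 := by
  have hγ := (hasDerivAt_polarCurve (differentiableAt_boundaryRadius hl hθ)
    (boundaryRadius_pos l θ).ne').differentiableAt.hasDerivAt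
  have hK := (hasDerivAt_cauchyInverse l
    (ne_zero_of_mem_annulus (boundaryCurve_mem_annulus l θ))).comp θ hγ
  have him := Complex.imCLM.hasFDerivAt.comp_hasDerivAt θ hK
  have hzero : Complex.imCLM ∘ cauchyInverse l ∘ boundaryCurve l = fun _ => 0 :=
    funext (im_cauchyInverse_boundaryCurve hl)
  have hderiv := him.unique (hzero ▸ hasDerivAt_const θ 0)
  rwa [Complex.imCLM_apply, div_mul_eq_mul_div, mul_div_assoc] at hderiv

lemma re_mul_nonpos_of_im_mul_eq_zero {A q : ℂ} (hq : q.im = 1) (hA : 0 ≤ A.im)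
    (hAq : (A * q).im = 0) : (A * q).re ≤ 0 := by
  simp only [Complex.mul_im, Complex.mul_re, hq] at hAq ⊢
  have hre : A.re = -(A.im * q.re) := by linarith
  rw [hre]
  nlinarith [mul_nonneg hA (sq_nonneg q.re)]

lemma im_eulerCauchyInverse_mul_deriv_nonpos (hl : |l| ≤ 1) (hθ : θ ∈ Ioo 0 π) :
    (eulerCauchyInverse l (boundaryCurve l θ) * deriv (boundaryCurve l) θ).im ≤ 0 := by
  have hsin := sin_pos_of_mem_Ioo hθ
  have hρ := boundaryRadius_pos l θ
  have hA : 0 ≤ (eulerCauchyInverse l (boundaryCurve l θ)).im := by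
    have hsq : boundaryRadius l θ ^ 2 ≤ 1 := pow_le_one₀ hρ.le (boundaryRadius_le_one l θ)
    rw [im_eulerCauchyInverse_boundaryCurve hl]
    exact div_nonneg (mul_nonneg (by positivity) (by linarith)) hρ.le
  have hq : (logDeriv (boundaryCurve l) θ).im = 1 := by
    rw [boundaryCurve, logDeriv_polarCurve (differentiableAt_boundaryRadius hl hθ) hρ.ne']
    simp
  have him := im_eulerCauchyInverse_mul_logDeriv hl hθ
  have hfactor : eulerCauchyInverse l (boundaryCurve l θ) * deriv (boundaryCurve l) θ =
      eulerCauchyInverse l (boundaryCurve l θ) * logDeriv (boundaryCurve l) θ *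
        boundaryCurve l θ := by
    have hne := ne_zero_of_mem_annulus (boundaryCurve_mem_annulus l θ)
    rw [logDeriv_apply]
    field_simp
  rw [hfactor, Complex.mul_im, him, zero_mul, add_zero, boundaryCurve, im_polarCurve]
  exact mul_nonpos_of_nonpos_of_nonneg (re_mul_nonpos_of_im_mul_eq_zero hq hA him) (by positivity)

end BoundaryCurve

section CubicRTransform

open Real Set

variable {l m : ℝ}

/-- The cofactor `Q` in `K ζ - K m = -m⁻¹ * (1 - m / ζ) * Q ζ`, where `K = cauchyInverse l`. -/
def cauchyInverseCofactor (l m : ℝ) (ζ : ℂ) : ℂ := 1 - m * (3 + l * m) * ζ - l * m * ζ ^ 2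

lemma cauchyInverse_ofReal (l m : ℝ) :
    cauchyInverse l m = ((m⁻¹ + (3 * m + l * m ^ 2) : ℝ) : ℂ) := by
  rw [cauchyInverse]
  push_cast
  ring

lemma cauchyInverse_sub_eq (hm : m ≠ 0) {ζ : ℂ} (hζ : ζ ≠ 0) :
    cauchyInverse l ζ - cauchyInverse l m =
      -(m : ℂ)⁻¹ * (1 - m / ζ) * cauchyInverseCofactor l m ζ := by
  have hm' : (m : ℂ) ≠ 0 := by exact_mod_cast hm
  rw [cauchyInverse, cauchyInverse, cauchyInverseCofactor]
  field_simp
  ring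

lemma differentiable_cauchyInverseCofactor (l m : ℝ) :
    Differentiable ℂ (cauchyInverseCofactor l m) := by
  unfold cauchyInverseCofactor
  fun_prop

lemma deriv_cauchyInverseCofactor (l m : ℝ) (ζ : ℂ) :
    deriv (cauchyInverseCofactor l m) ζ = -(m * (3 + l * m)) - 2 * l * m * ζ := by
  refine HasDerivAt.deriv (((((hasDerivAt_id ζ).const_mul _).const_sub 1).sub
    ((hasDerivAt_pow 2 ζ).const_mul _)).congr_deriv ?_)
  push_cast
  ring

lemma cauchyInverseCofactor_ne_zero (hl : |l| ≤ 1) (hm : 12 * |m| < 1) {ζ : ℂ} (hζ : ‖ζ‖ < 2) :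
    cauchyInverseCofactor l m ζ ≠ 0 := by
  intro h0
  have hone : (1 : ℂ) = m * ((3 + l * m) * ζ + l * ζ ^ 2) := by
    rw [cauchyInverseCofactor] at h0
    linear_combination h0
  have hlin : ‖(3 + l * m : ℂ)‖ ≤ 3 + 1 * 1 := by
    refine (norm_add_le _ _).trans (add_le_add (by simp) ?_)
    rw [norm_mul, Complex.norm_real, Complex.norm_real, norm_eq_abs, norm_eq_abs]
    gcongr
    linarith [abs_nonneg m]
  have hbound : ‖(3 + l * m) * ζ + l * ζ ^ 2‖ ≤ (3 + 1 * 1) * 2 + 1 * 2 ^ 2 := by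
    refine (norm_add_le _ _).trans ?_
    rw [norm_mul, norm_mul, norm_pow, Complex.norm_real, norm_eq_abs]
    gcongr
  have hnorm := congrArg norm hone
  rw [norm_one, norm_mul, Complex.norm_real, norm_eq_abs] at hnorm
  nlinarith [abs_nonneg m]

lemma one_sub_div_mem_slitPlane (hm : 12 * |m| < 1) {ζ : ℂ} (hζ : ζ ∈ annulus) :
    1 - m / ζ ∈ Complex.slitPlane := by
  rw [sub_eq_add_neg]
  refine Complex.mem_slitPlane_of_norm_lt_one ?_
  rw [norm_neg, norm_div, Complex.norm_real, norm_eq_abs,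
    div_lt_one (norm_pos_iff.mpr (ne_zero_of_mem_annulus hζ))]
  linarith [hζ.1, abs_nonneg m]

lemma norm_lt_two_of_mem_annulus {ζ : ℂ} (hζ : ζ ∈ annulus) : ‖ζ‖ < 2 :=
  hζ.2.trans_lt one_lt_two

lemma cauchyInverse_sub_ne_zero (hl : |l| ≤ 1) (hm0 : m ≠ 0) (hm : 12 * |m| < 1) {ζ : ℂ}
    (hζ : ζ ∈ annulus) : cauchyInverse l ζ - cauchyInverse l m ≠ 0 := by
  rw [cauchyInverse_sub_eq hm0 (ne_zero_of_mem_annulus hζ)]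
  exact mul_ne_zero (mul_ne_zero (by simpa using hm0)
    (Complex.slitPlane_ne_zero (one_sub_div_mem_slitPlane hm hζ)))
    (cauchyInverseCofactor_ne_zero hl hm (norm_lt_two_of_mem_annulus hζ))

/-- The Euler derivative of the logarithm of `cauchyInverse_sub_eq`. -/
lemma eulerCauchyInverse_div_sub (hl : |l| ≤ 1) (hm0 : m ≠ 0) (hm : 12 * |m| < 1) {ζ : ℂ}
    (hζ : ζ ∈ annulus) :
    eulerCauchyInverse l ζ / (cauchyInverse l ζ - cauchyInverse l m) - m / ζ =
      m * (m / ζ ^ 2 / (1 - m / ζ)) + ζ * logDeriv (cauchyInverseCofactor l m) ζ := by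
  have hζ0 := ne_zero_of_mem_annulus hζ
  have hm' : (m : ℂ) ≠ 0 := by exact_mod_cast hm0
  have hlog := Complex.slitPlane_ne_zero (one_sub_div_mem_slitPlane hm hζ)
  have hQ := cauchyInverseCofactor_ne_zero hl hm (norm_lt_two_of_mem_annulus hζ)
  have hproduct : eulerCauchyInverse l ζ = -(m : ℂ)⁻¹ * (m / ζ * cauchyInverseCofactor l m ζ +
      (1 - m / ζ) * (ζ * deriv (cauchyInverseCofactor l m) ζ)) := by
    rw [deriv_cauchyInverseCofactor, eulerCauchyInverse, cauchyInverseCofactor]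
    field_simp
    ring
  rw [cauchyInverse_sub_eq hm0 hζ0, hproduct, logDeriv_apply]
  generalize deriv (cauchyInverseCofactor l m) ζ = Q', cauchyInverseCofactor l m ζ = Q at hQ ⊢
  have hsub : ζ - m ≠ 0 := fun h => hlog (by rw [← sub_eq_zero.mp h, div_self hζ0, sub_self])
  field_simp
  ring

lemma exists_primitive_eulerCauchyInverse_div_sub (hl : |l| ≤ 1) (hm0 : m ≠ 0)
    (hm : 12 * |m| < 1) :
    ∃ L : ℂ → ℂ, (∀ ζ ∈ annulus, HasDerivAt L
      (eulerCauchyInverse l ζ / (cauchyInverse l ζ - cauchyInverse l m) - m / ζ) ζ) ∧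
      ∀ x : ℝ, (x : ℂ) ∈ annulus → (L x).im = 0 := by
  have hQ : ∀ ζ ∈ Metric.ball (0 : ℂ) 2, cauchyInverseCofactor l m ζ ≠ 0 := fun ζ hζ =>
    cauchyInverseCofactor_ne_zero hl hm (by simpa using hζ)
  have hdiff := differentiable_cauchyInverseCofactor l m
  obtain ⟨F, hF, hFreal⟩ := exists_primitive_real_on_reals (R := 2)
    (g := fun ζ => ζ * logDeriv (cauchyInverseCofactor l m) ζ)
    (differentiableOn_id.mul (hdiff.deriv.differentiableOn.div hdiff.differentiableOn hQ))
    (fun x => by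
      rw [logDeriv_apply, deriv_cauchyInverseCofactor, cauchyInverseCofactor]
      norm_cast)
  refine ⟨fun ζ => m * Complex.log (1 - m / ζ) + F ζ, fun ζ hζ => ?_, fun x hx => ?_⟩
  · have hinner : HasDerivAt (fun ζ : ℂ => 1 - m / ζ) (m / ζ ^ 2) ζ :=
      (((hasDerivAt_inv (ne_zero_of_mem_annulus hζ)).const_mul (m : ℂ)).const_sub 1).congr_deriv
        (by ring)
    rw [eulerCauchyInverse_div_sub hl hm0 hm hζ]
    exact ((hinner.clog (one_sub_div_mem_slitPlane hm hζ)).const_mul _).add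
      (hF ζ (by simpa using norm_lt_two_of_mem_annulus hζ))
  · have hpos : 0 < 1 - m / x :=
      Complex.ofReal_mem_slitPlane.mp (by simpa using one_sub_div_mem_slitPlane hm hx)
    have hlog : Complex.log (1 - m / x) = (Real.log (1 - m / x) : ℝ) := by
      rw [Complex.ofReal_log hpos.le]
      push_cast
      rfl
    rw [Complex.add_im, Complex.im_ofReal_mul, hlog, Complex.ofReal_im, mul_zero, zero_add]
    exact hFreal x (by simpa using norm_lt_two_of_mem_annulus hx)

lemma hasDerivAt_primitive_eulerCauchyInverse (l : ℝ) (ζ : ℂ) :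
    HasDerivAt (fun ζ : ℂ => (3 / 2 : ℝ) * ζ ^ 2 + (2 * l / 3 : ℝ) * ζ ^ 3)
      (eulerCauchyInverse l ζ - (-1 : ℝ) / ζ) ζ := by
  refine (((hasDerivAt_pow 2 ζ).const_mul _).add
    ((hasDerivAt_pow 3 ζ).const_mul _)).congr_deriv ?_
  rw [eulerCauchyInverse]
  push_cast
  ring

lemma integrableOn_im_eulerCauchyInverse (hl : |l| ≤ 1) :
    IntegrableOn (fun θ => (eulerCauchyInverse l (boundaryCurve l θ) *
      deriv (boundaryCurve l) θ).im) (Ioo 0 π) :=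
  integrableOn_im_mul_deriv_polarCurve (continuous_boundaryRadius l) (boundaryRadius_pos l)
    (fun _ => differentiableAt_boundaryRadius hl) (boundaryCurve_mem_annulus l)
    (fun ζ _ => hasDerivAt_primitive_eulerCauchyInverse l ζ)
    (fun _ => im_eulerCauchyInverse_mul_deriv_nonpos hl)

lemma setIntegral_im_eulerCauchyInverse (hl : |l| ≤ 1) :
    ∫ θ in Ioo 0 π, (eulerCauchyInverse l (boundaryCurve l θ) * deriv (boundaryCurve l) θ).im =
      -π := by
  rw [← neg_one_mul]
  refine setIntegral_im_mul_deriv_polarCurve (continuous_boundaryRadius l) (boundaryRadius_pos l)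
    (fun _ => differentiableAt_boundaryRadius hl) (boundaryCurve_mem_annulus l)
    (fun ζ _ => hasDerivAt_primitive_eulerCauchyInverse l ζ) (fun x _ => ?_)
    (integrableOn_im_eulerCauchyInverse hl)
  simp only [Complex.add_im, Complex.im_ofReal_mul, ← Complex.ofReal_pow, Complex.ofReal_im]
  ring

/-- The density with respect to `dθ` of the measure with Cauchy inverse `cauchyInverse l`, by
Stieltjes inversion: it is `-π⁻¹ Im ζ dK` along the boundary curve. -/
def boundaryDensity (l θ : ℝ) : ℝ :=
  -π⁻¹ * (eulerCauchyInverse l (boundaryCurve l θ) * deriv (boundaryCurve l) θ).im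

lemma continuous_cauchyInverse_boundaryCurve (l : ℝ) :
    Continuous fun θ => cauchyInverse l (boundaryCurve l θ) := by
  have hcurve : Continuous (boundaryCurve l) := continuous_polarCurve (by fun_prop)
  refine continuous_iff_continuousAt.mpr fun θ => ?_
  have hne := ne_zero_of_mem_annulus (boundaryCurve_mem_annulus l θ)
  exact (hasDerivAt_cauchyInverse l hne).continuousAt.comp hcurve.continuousAt

lemma norm_cauchyInverse_le (hl : |l| ≤ 1) {ζ : ℂ} (hζ : ζ ∈ annulus) :
    ‖cauchyInverse l ζ‖ ≤ 6 := by
  have hinv : ‖ζ‖⁻¹ ≤ 2 := inv_le_of_inv_le₀ two_pos (by simpa using hζ.1)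
  have hone := hζ.2
  calc ‖cauchyInverse l ζ‖ ≤ ‖ζ‖⁻¹ + 3 * ‖ζ‖ + |l| * ‖ζ‖ ^ 2 := by
        refine norm_add₃_le.trans_eq ?_
        simp
    _ ≤ 2 + 3 * 1 + 1 * 1 ^ 2 := by gcongr
    _ = 6 := by norm_num

lemma exists_measure_boundaryDensity (hl : |l| ≤ 1) :
    ∃ μ : Measure ℝ, IsProbabilityMeasure μ ∧ μ (Icc (-6) 6)ᶜ = 0 ∧
      ∀ f : ℝ → ℝ, Measurable f → ∫ x, f x ∂μ =
        ∫ θ in Ioo 0 π, boundaryDensity l θ * f (cauchyInverse l (boundaryCurve l θ)).re := by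
  refine exists_measure_of_density ((integrableOn_im_eulerCauchyInverse hl).const_mul _) ?_ ?_
    (Complex.continuous_re.comp (continuous_cauchyInverse_boundaryCurve l)).measurable fun θ =>
      (Complex.abs_re_le_norm _).trans (norm_cauchyInverse_le hl (boundaryCurve_mem_annulus l θ))
  · refine (ae_restrict_mem measurableSet_Ioo).mono fun θ hθ => ?_
    exact mul_nonneg_of_nonpos_of_nonpos (neg_nonpos.mpr (inv_nonneg.mpr pi_nonneg))
      (im_eulerCauchyInverse_mul_deriv_nonpos hl hθ)
  · simp only [boundaryDensity]
    rw [integral_const_mul, setIntegral_im_eulerCauchyInverse hl]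
    field_simp

lemma setIntegral_boundaryDensity_mul_inv_sub (hl : |l| ≤ 1) (hm0 : m ≠ 0) (hm : 12 * |m| < 1) :
    ∫ θ in Ioo 0 π, boundaryDensity l θ *
      ((cauchyInverse l (boundaryCurve l θ)).re - (m⁻¹ + (3 * m + l * m ^ 2)))⁻¹ = -m := by
  set z := m⁻¹ + (3 * m + l * m ^ 2)
  have hK : ∀ θ, cauchyInverse l (boundaryCurve l θ) - cauchyInverse l m =
      (((cauchyInverse l (boundaryCurve l θ)).re - z : ℝ) : ℂ) := fun θ => by
    rw [cauchyInverse_ofReal, Complex.ofReal_sub, sub_left_inj]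
    exact Complex.ext rfl (by simp [im_cauchyInverse_boundaryCurve hl])
  have hne : ∀ θ, (cauchyInverse l (boundaryCurve l θ)).re - z ≠ 0 := fun θ h => by
    refine cauchyInverse_sub_ne_zero hl hm0 hm (boundaryCurve_mem_annulus l θ) ?_
    rw [hK, h, Complex.ofReal_zero]
  have hfactor : ∀ θ, (eulerCauchyInverse l (boundaryCurve l θ) /
      (cauchyInverse l (boundaryCurve l θ) - cauchyInverse l m) * deriv (boundaryCurve l) θ).im =
      (eulerCauchyInverse l (boundaryCurve l θ) * deriv (boundaryCurve l) θ).im *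
        ((cauchyInverse l (boundaryCurve l θ)).re - z)⁻¹ := fun θ => by
    rw [hK, div_mul_eq_mul_div, Complex.div_ofReal_im, div_eq_mul_inv]
  have hcont : Continuous fun θ => ((cauchyInverse l (boundaryCurve l θ)).re - z)⁻¹ :=
    ((Complex.continuous_re.comp (continuous_cauchyInverse_boundaryCurve l)).sub
      continuous_const).inv₀ hne
  have hint := (integrableOn_im_eulerCauchyInverse hl).mul_continuousOn_of_subset
    hcont.continuousOn measurableSet_Ioo isCompact_Icc Ioo_subset_Icc_self
  obtain ⟨L, hL, hreal⟩ := exists_primitive_eulerCauchyInverse_div_sub hl hm0 hm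
  have hresidue := setIntegral_im_mul_deriv_polarCurve (continuous_boundaryRadius l)
    (boundaryRadius_pos l) (fun _ => differentiableAt_boundaryRadius hl)
    (boundaryCurve_mem_annulus l) hL hreal (hint.congr_fun (fun θ _ => (hfactor θ).symm)
      measurableSet_Ioo)
  rw [← boundaryCurve, funext hfactor] at hresidue
  simp only [boundaryDensity, mul_assoc]
  rw [integral_const_mul, hresidue]
  field_simp

lemma exists_measure_hasRTransform (hl : |l| ≤ 1) :
    ∃ μ : Measure ℝ, IsProbabilityMeasure μ ∧ μ (Icc (-6) 6)ᶜ = 0 ∧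
      HasRTransform μ fun m => 3 * m + l * m ^ 2 := by
  obtain ⟨μ, hμ, hsupp, hint⟩ := exists_measure_boundaryDensity hl
  refine ⟨μ, hμ, hsupp, ?_⟩
  have hsmall : ∀ᶠ m in 𝓝 (0 : ℝ), 12 * |m| < 1 :=
    (Continuous.tendsto' (by fun_prop) _ _ (by simp)).eventually (gt_mem_nhds one_pos)
  filter_upwards [hsmall.filter_mono nhdsWithin_le_nhds, self_mem_nhdsWithin] with m hm hm0
  rw [resolventTransform_eq_integral_inv, ← setIntegral_boundaryDensity_mul_inv_sub hl hm0 hm]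
  exact hint _ (by fun_prop)

end CubicRTransform

section Sufficiency

open Set

variable {a b c : ℝ}

lemma map_affine_compl_Icc_null {μ : Measure ℝ} {S : ℝ} (hS : μ (Icc (-S) S)ᶜ = 0) (a t : ℝ) :
    μ.map (fun x => a + t * x) (Icc (-(|a| + |t| * S)) (|a| + |t| * S))ᶜ = 0 := by
  rw [Measure.map_apply (by fun_prop) measurableSet_Icc.compl]
  refine measure_mono_null (fun x => mt fun hx => abs_le.mp ?_) hS
  calc |a + t * x| ≤ |a| + |t| * |x| := (abs_add_le _ _).trans_eq (by rw [abs_mul])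
    _ ≤ |a| + |t| * S := by gcongr; exact abs_le.mpr hx

/-- After an affine change of variables the R-transform is `3 * m + l * m ^ 2` with
`l = c / (B / 3) ^ (3 / 2)`, and the hypothesis says `|l| ≤ 1`. -/
lemma exists_measure_hasRTransform_quadratic (a : ℝ) {B : ℝ} (h : 27 * c ^ 2 ≤ B ^ 3) :
    ∃ (μ : Measure ℝ) (S : ℝ), IsProbabilityMeasure μ ∧ μ (Icc (-S) S)ᶜ = 0 ∧
      HasRTransform μ fun m => a + B * m + c * m ^ 2 := by
  have hB : 0 ≤ B := by
    by_contra! hneg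
    nlinarith [sq_nonneg c, pow_pos (neg_pos.mpr hneg) 3]
  obtain ⟨t, ht, rfl⟩ : ∃ t : ℝ, 0 ≤ t ∧ B = 3 * t ^ 2 :=
    ⟨√(B / 3), Real.sqrt_nonneg _, by rw [Real.sq_sqrt (by positivity)]; ring⟩
  have hc : |c| ≤ t ^ 3 := abs_le_of_sq_le_sq (by linarith) (by positivity)
  rcases ht.eq_or_lt with rfl | htpos
  · obtain rfl : c = 0 := abs_eq_zero.mp (le_antisymm (by simpa using hc) (abs_nonneg c))
    exact ⟨Measure.dirac a, |a|, inferInstance, by simp [neg_abs_le, le_abs_self],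
      by simpa using hasRTransform_dirac a⟩
  · have hl : |c / t ^ 3| ≤ 1 := by
      rwa [abs_div, abs_of_pos (pow_pos htpos 3), div_le_one (pow_pos htpos 3)]
    obtain ⟨μ, hμ, hsupp, hr⟩ := exists_measure_hasRTransform hl
    refine ⟨_, _, Measure.isProbabilityMeasure_map (by fun_prop),
      map_affine_compl_Icc_null hsupp a t, ?_⟩
    convert hr.map_affine a htpos.ne' using 2 with m
    field_simp
    ring

lemma memV_cubic (h : 27 * c ^ 2 ≤ (b + 1) ^ 3) :
    memV fun m => 1 + a * m + b * m ^ 2 + c * m ^ 3 := by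
  obtain ⟨μ, S, hμ, hS, hr⟩ := exists_measure_hasRTransform_quadratic a h
  convert hr.memV hS (by fun_prop) using 2 with m
  ring

end Sufficiency

section SelfEnergy

open Set

variable {ν : Measure ℝ} {V : ℝ → ℝ} {R : ℝ} {z : ℂ}

/-- The upper half-plane together with a right half-plane: a connected domain on which the
transforms of a measure supported in `[-R, R]` are holomorphic and which contains a ray of `ℝ`. -/
def outerRegion (R : ℝ) : Set ℂ := {z | 0 < z.im} ∪ {z | R < z.re}

lemma isOpen_outerRegion (R : ℝ) : IsOpen (outerRegion R) :=
  (isOpen_lt continuous_const Complex.continuous_im).union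
    (isOpen_lt continuous_const Complex.continuous_re)

lemma isPreconnected_outerRegion (R : ℝ) : IsPreconnected (outerRegion R) :=
  (convex_halfSpace_im_gt 0).isPreconnected.union (⟨R + 1, 1⟩ : ℂ) (by simp) (by simp)
    (convex_halfSpace_re_gt R).isPreconnected

lemma notMem_image_support (hR : ν (Icc (-R) R)ᶜ = 0) (hz : z ∈ outerRegion R) :
    z ∉ algebraMap ℝ ℂ '' ν.support := by
  rintro ⟨x, hx, rfl⟩
  have hxR := Measure.support_subset_of_isClosed isClosed_Icc (mem_ae_iff.mpr hR) hx
  rcases hz with hz | hz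
  · simp at hz
  · exact absurd hxR.2 (not_le.mpr (by simpa using hz))

lemma integrable_inv_sub [IsFiniteMeasure ν] (hR : ν (Icc (-R) R)ᶜ = 0)
    (hz : z ∈ outerRegion R) : Integrable (fun x : ℝ => ((x : ℂ) - z)⁻¹) ν := by
  refine (integrable_resolvent (notMem_image_support hR hz)).congr (.of_forall fun x => ?_)
  simp [resolvent, Ring.inverse_eq_inv']

lemma differentiableOn_resolventTransform [IsFiniteMeasure ν] (hR : ν (Icc (-R) R)ᶜ = 0) :
    DifferentiableOn ℂ (resolventTransform ν) (outerRegion R) := fun z hz =>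
  (hasDerivAt_resolventTransform z
    (notMem_image_support hR hz)).differentiableAt.differentiableWithinAt

lemma im_inv_ofReal_sub (x : ℝ) (z : ℂ) :
    ((x : ℂ) - z)⁻¹.im = z.im * ‖((x : ℂ) - z)⁻¹‖ ^ 2 := by
  rw [norm_inv, inv_pow, ← Complex.normSq_eq_norm_sq, Complex.inv_im]
  simp [div_eq_mul_inv]

lemma im_resolventTransform [IsFiniteMeasure ν] (hR : ν (Icc (-R) R)ᶜ = 0)
    (hz : z ∈ outerRegion R) :
    (resolventTransform ν z).im = z.im * ∫ x : ℝ, ‖((x : ℂ) - z)⁻¹‖ ^ 2 ∂ν := by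
  have him := Complex.imCLM.integral_comp_comm (integrable_inv_sub hR hz)
  simp only [Complex.imCLM_apply, im_inv_ofReal_sub, integral_const_mul] at him
  rw [him, resolventTransform_eq_integral_inv]
  rfl

lemma sq_norm_resolventTransform_le [IsProbabilityMeasure ν] (hR : ν (Icc (-R) R)ᶜ = 0)
    (hz : 0 < z.im) :
    ‖resolventTransform ν z‖ ^ 2 ≤ ∫ x : ℝ, ‖((x : ℂ) - z)⁻¹‖ ^ 2 ∂ν := by
  have hint := integrable_inv_sub (z := z) hR (Or.inl hz)
  have hsq : Integrable (fun x : ℝ => ‖((x : ℂ) - z)⁻¹‖ ^ 2) ν := by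
    refine (hint.im.const_mul z.im⁻¹).congr (.of_forall fun x => ?_)
    change z.im⁻¹ * ((x : ℂ) - z)⁻¹.im = _
    rw [im_inv_ofReal_sub, inv_mul_cancel_left₀ hz.ne']
  rw [resolventTransform_eq_integral_inv]
  exact (convexOn_univ_norm.pow (fun _ _ => norm_nonneg _) 2).map_integral_le (by fun_prop)
    isClosed_univ (by simp) hint hsq

lemma integral_pos_of_ae_pos {α : Type*} {mα : MeasurableSpace α} {μ : Measure α} [NeZero μ]
    {f : α → ℝ} (hf : Integrable f μ) (hpos : ∀ᵐ x ∂μ, 0 < f x) : 0 < ∫ x, f x ∂μ := by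
  rw [integral_pos_iff_support_of_nonneg_ae (hpos.mono fun _ => le_of_lt) hf, pos_iff_ne_zero]
  exact frequently_ae_mem_iff.mp (hpos.mono fun _ => ne_of_gt).frequently

lemma resolventTransform_ne_zero [IsProbabilityMeasure ν] (hR : ν (Icc (-R) R)ᶜ = 0)
    (hz : z ∈ outerRegion R) : resolventTransform ν z ≠ 0 := by
  have hint := integrable_inv_sub hR hz
  rw [resolventTransform_eq_integral_inv]
  intro hzero
  rcases hz with (hz : 0 < z.im) | (hz : R < z.re)
  · have hpos : 0 < ∫ x : ℝ, ((x : ℂ) - z)⁻¹.im ∂ν := by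
      refine integral_pos_of_ae_pos hint.im (.of_forall fun x => ?_)
      have hne : (x : ℂ) - z ≠ 0 := fun h => hz.ne' (by simpa using congrArg Complex.im h)
      rw [im_inv_ofReal_sub]
      exact mul_pos hz (pow_pos (norm_pos_iff.mpr (inv_ne_zero hne)) 2)
    have him := Complex.imCLM.integral_comp_comm hint
    simp only [Complex.imCLM_apply] at him
    exact hpos.ne' (him.trans (congrArg Complex.im hzero))
  · have hpos : 0 < ∫ x : ℝ, -((x : ℂ) - z)⁻¹.re ∂ν := by
      refine integral_pos_of_ae_pos hint.re.neg
        ((ae_abs_le_of_compl_Icc_null hR).mono fun x hx => ?_)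
      have hre : ((x : ℂ) - z).re < 0 := by simpa using (abs_le.mp hx).2.trans_lt hz
      rw [Complex.inv_re, ← neg_div]
      exact div_pos (neg_pos.mpr hre)
        (Complex.normSq_pos.mpr fun h => hre.ne (congrArg Complex.re h))
    have hre := Complex.reCLM.integral_comp_comm hint
    simp only [Complex.reCLM_apply] at hre
    rw [integral_neg] at hpos
    exact (neg_pos.mp hpos).ne (hre.trans (congrArg Complex.re hzero))

/-- The self-energy `z - 1 / G(z)` of `ν`, where the Cauchy transform `G` is minus the resolvent
transform. -/
def selfEnergy (ν : Measure ℝ) (z : ℂ) : ℂ := z + (resolventTransform ν z)⁻¹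

lemma differentiableOn_selfEnergy [IsProbabilityMeasure ν] (hR : ν (Icc (-R) R)ᶜ = 0) :
    DifferentiableOn ℂ (selfEnergy ν) (outerRegion R) :=
  differentiableOn_id.add ((differentiableOn_resolventTransform hR).inv fun _ =>
    resolventTransform_ne_zero hR)

lemma im_selfEnergy_nonpos [IsProbabilityMeasure ν] (hR : ν (Icc (-R) R)ᶜ = 0) (hz : 0 < z.im) :
    (selfEnergy ν z).im ≤ 0 := by
  have hU : z ∈ outerRegion R := Or.inl hz
  have hne : 0 < ‖resolventTransform ν z‖ ^ 2 := by
    have := resolventTransform_ne_zero hR hU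
    positivity
  rw [selfEnergy, Complex.add_im, Complex.inv_im, Complex.normSq_eq_norm_sq, neg_div,
    ← sub_eq_add_neg, sub_nonpos, le_div_iff₀ hne, im_resolventTransform hR hU]
  exact mul_le_mul_of_nonneg_left (sq_norm_resolventTransform_le hR hz) hz.le

lemma IsCSKVarianceFun.selfEnergy_eventuallyEq (h : IsCSKVarianceFun ν V) :
    ∀ᶠ m in 𝓝[≠] (0 : ℝ), selfEnergy ν (m + V m / m : ℝ) = m := by
  filter_upwards [h.resolventTransform_eventuallyEq] with m hm
  rw [selfEnergy, resolventTransform_ofReal, hm]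
  push_cast
  rw [inv_neg, inv_div]
  ring

/-- The values of `m + V m / m` at small `m > 0` accumulate in the region, because `selfEnergy ν`
recovers `m` from them. -/
lemma IsCSKVarianceFun.eqOn_zero {f : ℂ → ℂ} (h : IsCSKVarianceFun ν V)
    (hf : DifferentiableOn ℂ f (outerRegion R))
    (hzero : ∀ᶠ m in 𝓝[≠] (0 : ℝ), f (m + V m / m : ℝ) = 0) : EqOn f 0 (outerRegion R) := by
  have hright : 𝓝[>] (0 : ℝ) ≤ 𝓝[≠] 0 := nhdsWithin_mono _ fun m => ne_of_gt (b := (0 : ℝ))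
  have hcont : ∀ᶠ m in 𝓝 0, ContinuousAt V m :=
    h.1.eventually_analyticAt.mono fun _ => AnalyticAt.continuousAt
  have hVpos : ∀ᶠ m in 𝓝 0, 0 < V m := h.1.continuousAt (lt_mem_nhds h.2.1)
  obtain ⟨m, hnear, ⟨hVm, hVcont⟩, hlt, hm⟩ := ((eventually_eventually_nhdsWithin.mpr
    ((h.selfEnergy_eventuallyEq.and hzero).filter_mono hright)).and
    (((hVpos.and hcont).filter_mono nhdsWithin_le_nhds).and
    (((eventually_lt_abs_add_div h.1.continuousAt h.2.1 R).filter_mono hright).and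
    self_mem_nhdsWithin))).exists
  have hm : 0 < m := hm
  rw [isOpen_Ioi.nhdsWithin_eq hm] at hnear
  rw [abs_of_pos (by positivity)] at hlt
  have hcurve : Tendsto (fun n : ℝ => ((n + V n / n : ℝ) : ℂ)) (𝓝[≠] m)
      (𝓝[≠] ((m + V m / m : ℝ) : ℂ)) := by
    refine tendsto_nhdsWithin_iff.mpr ⟨?_, ?_⟩
    · refine Tendsto.mono_left ?_ nhdsWithin_le_nhds
      exact Complex.continuous_ofReal.continuousAt.comp
        (continuousAt_id.add (hVcont.div continuousAt_id hm.ne'))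
    · filter_upwards [hnear.filter_mono nhdsWithin_le_nhds, self_mem_nhdsWithin]
        with n hn (hnm : n ≠ m) heq
      have hself := hn.1.symm.trans ((congrArg (selfEnergy ν) heq).trans hnear.self_of_nhds.1)
      exact hnm (Complex.ofReal_injective hself)
  refine (hf.analyticOnNhd (isOpen_outerRegion R)).eqOn_zero_of_preconnected_of_frequently_eq_zero
    (isPreconnected_outerRegion R) (Or.inr (by simpa using hlt)) (hcurve.frequently ?_)
  exact ((hnear.filter_mono nhdsWithin_le_nhds).mono fun _ hn => hn.2).frequently

variable {W : ℂ → ℂ}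

lemma IsCSKVarianceFun.apply_selfEnergy [IsProbabilityMeasure ν] (h : IsCSKVarianceFun ν V)
    (hR : ν (Icc (-R) R)ᶜ = 0) (hW : Differentiable ℂ W) (hVW : ∀ m : ℝ, W m = V m)
    (hz : z ∈ outerRegion R) : W (selfEnergy ν z) = selfEnergy ν z * (z - selfEnergy ν z) := by
  have hσ := differentiableOn_selfEnergy hR
  refine sub_eq_zero.mp (h.eqOn_zero (f := fun z => W (selfEnergy ν z) -
    selfEnergy ν z * (z - selfEnergy ν z)) ((hW.comp_differentiableOn hσ).sub
    (hσ.mul (differentiableOn_id.sub hσ))) ?_ hz)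
  filter_upwards [h.selfEnergy_eventuallyEq, self_mem_nhdsWithin] with m hm (hm0 : m ≠ 0)
  have hm0' : (m : ℂ) ≠ 0 := by exact_mod_cast hm0
  rw [hm, hVW]
  push_cast
  field_simp
  ring

/-- Differentiating `W σ = σ (z - σ)` in `z` gives `(W' σ + 2 σ - z) σ' = σ`, while `W 0 ≠ 0`
prevents `σ` from vanishing. -/
lemma IsCSKVarianceFun.deriv_apply_selfEnergy_ne [IsProbabilityMeasure ν]
    (h : IsCSKVarianceFun ν V) (hR : ν (Icc (-R) R)ᶜ = 0) (hW : Differentiable ℂ W)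
    (hVW : ∀ m : ℝ, W m = V m) (hz : z ∈ outerRegion R) :
    deriv W (selfEnergy ν z) + 2 * selfEnergy ν z ≠ z := by
  intro hdouble
  have hnhds := (isOpen_outerRegion R).mem_nhds hz
  have hσ := ((differentiableOn_selfEnergy hR).differentiableAt hnhds).hasDerivAt
  have hleft := (hW (selfEnergy ν z)).hasDerivAt.comp z hσ
  have hright := hσ.mul ((hasDerivAt_id z).sub hσ)
  have heq : (W ∘ selfEnergy ν) =ᶠ[𝓝 z] selfEnergy ν * (id - selfEnergy ν) :=
    Filter.eventually_of_mem hnhds fun y hy => h.apply_selfEnergy hR hW hVW hy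
  have hderiv := hleft.unique (hright.congr_of_eventuallyEq heq)
  have hσ0 : selfEnergy ν z = 0 := by
    simp only [Pi.sub_apply, id_eq] at hderiv
    linear_combination -hderiv + deriv (selfEnergy ν) z * hdouble
  have hW0 : W 0 = 0 := by simpa [hσ0] using h.apply_selfEnergy hR hW hVW hz
  have hV0 : (V 0 : ℂ) = 0 := by rw [← hVW, Complex.ofReal_zero, hW0]
  exact h.2.1.ne' (by exact_mod_cast hV0)

end SelfEnergy

section Necessity

lemma exists_cubic_eq (B c : ℝ) : ∃ p : ℝ, p * (B - 4 * p ^ 2) = c := by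
  let f : ℝ → ℝ := fun p => p * (B - 4 * p ^ 2)
  have hbot : Tendsto f atTop atBot := by
    refine tendsto_id.atTop_mul_atBot₀ ?_
    exact tendsto_atBot_add_const_left _ B (tendsto_neg_atTop_atBot.comp
      ((tendsto_pow_atTop two_ne_zero).const_mul_atTop four_pos))
  have htop : Tendsto f atBot atTop :=
    (tendsto_neg_atBot_atTop.comp (hbot.comp tendsto_neg_atBot_atTop)).congr fun p => by simp [f]
  exact Continuous.surjective' (by fun_prop) htop hbot c

/-- The roots of `X ^ 3 - B * X - 2 * c` are then `-2 * p` and `p ± q * I`. -/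
lemma exists_nonreal_root {B c : ℝ} (h : B ^ 3 < 27 * c ^ 2) :
    ∃ p q : ℝ, 0 < q ∧ B = 3 * p ^ 2 - q ^ 2 ∧ c = -p * (p ^ 2 + q ^ 2) := by
  obtain ⟨p, rfl⟩ := exists_cubic_eq B c
  have hB : 0 < 3 * p ^ 2 - B := by
    by_contra! hneg
    have hdiscr : B ^ 3 - 27 * (p * (B - 4 * p ^ 2)) ^ 2 =
        (B - 3 * p ^ 2) * (B - 12 * p ^ 2) ^ 2 := by ring
    refine h.not_ge (sub_nonneg.mp ?_)
    rw [hdiscr]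
    exact mul_nonneg (by linarith) (sq_nonneg _)
  refine ⟨p, √(3 * p ^ 2 - B), Real.sqrt_pos.mpr hB, ?_, ?_⟩ <;>
  (rw [Real.sq_sqrt hB.le]; ring)

lemma im_pos_of_mul_conj_mul_eq {p q : ℝ} (hq : 0 < q) {w : ℂ}
    (h : p * (⟨p, -q⟩ : ℂ) * w = ⟨p, q⟩) : 0 < w.im := by
  obtain ⟨hre, him⟩ := Complex.ext_iff.mp h
  simp only [Complex.mul_re, Complex.ofReal_re, Complex.ofReal_im, mul_neg, zero_mul, neg_zero,
    sub_zero, Complex.mul_im, add_zero, neg_mul, sub_neg_eq_add] at hre him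
  have hp : p ≠ 0 := by
    rintro rfl
    exact hq.ne (by simpa using him)
  have hw : (p ^ 2 + q ^ 2) * w.im = 2 * q := by
    refine mul_left_cancel₀ hp ?_
    linear_combination p * him + q * hre
  have hpos : 0 < (p ^ 2 + q ^ 2) * w.im := hw ▸ mul_pos two_pos hq
  exact pos_of_mul_pos_right hpos (by positivity)

/-- `z` is the critical value of `w ↦ w + W w / w` at `1 / u`, for `u = p + q * I` a root of
`X ^ 3 - (b + 1) * X - 2 * c`, found by factoring
`W w - w * (z - w) = (1 - u * w) ^ 2 * (1 + c / u ^ 2 * w)`. -/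
lemma exists_double_root {a b c : ℝ} (h : (b + 1) ^ 3 < 27 * c ^ 2) :
    ∃ z : ℂ, 0 < z.im ∧ ∀ w : ℂ, w.im ≤ 0 →
      1 + a * w + b * w ^ 2 + c * w ^ 3 = w * (z - w) →
      a + 2 * b * w + 3 * c * w ^ 2 + 2 * w = z := by
  obtain ⟨p, q, hq, hb, rfl⟩ := exists_nonreal_root h
  obtain rfl : b = 3 * p ^ 2 - q ^ 2 - 1 := by linarith
  let u : ℂ := ⟨p, q⟩
  let v : ℂ := ⟨p, -q⟩
  have hu : u ≠ 0 := fun h0 => hq.ne' (congrArg Complex.im h0)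
  have hsum : u + v = 2 * p := by apply Complex.ext <;> simp [u, v, two_mul]
  have hprod : u * v = p ^ 2 + q ^ 2 := by
    apply Complex.ext <;> simp [u, v, ← Complex.ofReal_pow] <;> ring
  refine ⟨a + 2 * u + p * v / u, ?_, fun w hw heq => ?_⟩
  · have hpq : 0 < p * p + q * q :=
      add_pos_of_nonneg_of_pos (mul_self_nonneg p) (mul_pos hq hq)
    have him : (a + 2 * u + p * v / u).im = 2 * q ^ 3 / (p * p + q * q) := by
      simp only [Complex.add_im, Complex.ofReal_im, Complex.mul_im, Complex.re_ofNat,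
        Complex.im_ofNat, zero_mul, add_zero, zero_add, Complex.div_im, Complex.ofReal_re, mul_neg,
        neg_mul, Complex.normSq_apply, Complex.mul_re, neg_zero, sub_zero, u, v]
      field_simp
      ring
    rw [him]
    positivity
  have hquad : 3 * (p : ℂ) ^ 2 - q ^ 2 = 2 * p * v + u ^ 2 := by
    linear_combination hprod - (u + 2 * p) * hsum
  have hdiv : p * v / u * u = p * v := div_mul_cancel₀ _ hu
  push_cast at heq ⊢
  have hfactor : (1 - u * w) ^ 2 * (u - p * v * w) = 0 := by
    linear_combination u * heq + w * hdiv - u * w ^ 2 * hquad - u * p * w ^ 3 * hprod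
  rcases mul_eq_zero.mp hfactor with hsq | hlin
  · have hw1 : u * w = 1 := (sub_eq_zero.mp (pow_eq_zero_iff two_ne_zero |>.mp hsq)).symm
    linear_combination 2 * w * hquad - w * hdiv + 3 * p * w ^ 2 * hprod +
      (2 * u - 3 * p * v * w + p * v / u) * hw1
  · exact absurd hw (im_pos_of_mul_conj_mul_eq hq (sub_eq_zero.mp hlin).symm).not_ge

lemma le_of_memV_cubic {a b c : ℝ} (h : memV fun m => 1 + a * m + b * m ^ 2 + c * m ^ 3) :
    27 * c ^ 2 ≤ (b + 1) ^ 3 := by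
  obtain ⟨ν, ⟨hν, ⟨R, hR⟩, -⟩, -, hV⟩ := h
  by_contra! hlt
  obtain ⟨z, hz, hdouble⟩ := exists_double_root (a := a) hlt
  let W : ℂ → ℂ := fun w => 1 + a * w + b * w ^ 2 + c * w ^ 3
  have hW : Differentiable ℂ W := by fun_prop
  have hWV (m : ℝ) : W m = (1 + a * m + b * m ^ 2 + c * m ^ 3 : ℝ) := by simp [W]
  have hderiv (w : ℂ) : deriv W w = a + 2 * b * w + 3 * c * w ^ 2 := by
    have h1 : HasDerivAt (fun w : ℂ => 1 + a * w) (a * 1) w :=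
      ((hasDerivAt_id w).const_mul (a : ℂ)).const_add 1
    have h2 := (hasDerivAt_pow 2 w).const_mul (b : ℂ)
    have h3 := (hasDerivAt_pow 3 w).const_mul (c : ℂ)
    refine ((h1.add h2).add h3).deriv.trans ?_
    push_cast
    ring
  refine hV.deriv_apply_selfEnergy_ne hR hW hWV (Or.inl hz) ?_
  rw [hderiv]
  exact hdouble _ (im_selfEnergy_nonpos hR hz) (hV.apply_selfEnergy hR hW hWV (Or.inl hz))

end Necessity

/-- A cubic function `V(m) = 1 + a·m + b·m² + c·m³` is in `𝒱` iff `(b+1)³ ≥ 27c²`. -/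
theorem cubic_in_V_iff (a b c : ℝ) :
    memV (fun m => 1 + a * m + b * m ^ 2 + c * m ^ 3) ↔ (b + 1) ^ 3 ≥ 27 * c ^ 2 :=
  ⟨le_of_memV_cubic, memV_cubic⟩
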